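/- For any homeomorphism h : ℕ_τ → ℕ_τ of the Golomb space and any n ∈ {1,2,3}, one has h(n) = n. -/

import Mathlib

/-!
Distinct `x` and `y` are coprime iff for some `z` the closure of every nonempty open set contains an
intersection of closed neighbourhoods of `x`, `y` and `z`; hence a homeomorphism `h` fixes `1`,
preserves coprimality and permutes the primes (up to powers). Say `h` carries multiples of `p` to
multiples of `q`. Then `h` maps `powSet p` onto `powSet q`, and it is continuous from the `p`-adic
to the `q`-adic topology off these multiples, because near such a point a closed neighbourhood of
the Golomb topology amounts, at the prime `p`, to a congruence modulo a power of `p`. So the sets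
`clPow p r` with `r` prime go to sets `clPow q s` with `s` prime, and their inclusion order tells
`2`, `3` and the primes `p ≥ 5` apart:

* for odd `p` some `clPow p r` contains every number prime to `p`, while for `p = 2` none does, the
  units modulo `8` not being cyclic;
* for `p ≥ 5` there are three pairwise incomparable sets `clPow p r`, while for `p = 3` two of any
  three are comparable, the residues of `r` modulo `3` leaving only two chains.

Thus `h 2` is a power of `2` and `h 3` a power of `3`. For `k ≥ 2` some `clPow p r` contains `2 ^ k`
but not `2`, which rules out `h 2 = 2 ^ k`; likewise for `3`.
-/

open TopologicalSpace

/-- The arithmetic progression `a + bℕ₀ = {a + b*n : n ≥ 0}` inside the positive integers. -/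
def golombBasic (a b : ℕ) : Set ℕ+ := {x : ℕ+ | ∃ n : ℕ, (x : ℕ) = a + b * n}

/-- The Golomb topology on the positive integers, generated by the arithmetic
progressions `a + bℕ₀` with coprime `a, b ∈ ℕ`. -/
instance golombTopology : TopologicalSpace ℕ+ :=
  generateFrom {S : Set ℕ+ | ∃ a b : ℕ, 0 < a ∧ 0 < b ∧ Nat.Coprime a b ∧ S = golombBasic a b}

/-- The positive integers not divisible by `p` (the set `ℕ \ pℕ`). -/
abbrev Np (p : ℕ) : Type := {x : ℕ+ // ¬ p ∣ (x : ℕ)}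

/-- The `p`-adic topology on `ℕ \ pℕ`, generated by the traces of the sets
`x + p^nℕ₀`, `x, n ∈ ℕ`. -/
def padicTop (p : ℕ) : TopologicalSpace (Np p) :=
  generateFrom {S : Set (Np p) | ∃ x n : ℕ, 0 < x ∧ 0 < n ∧
    S = {y : Np p | ∃ k : ℕ, ((y : ℕ+) : ℕ) = x + p ^ n * k}}

/-- Closure of a set of positive integers in the `p`-adic topology on `ℕ \ pℕ`,
viewed again as a set of positive integers. -/
def padicClosure (p : ℕ) (A : Set ℕ+) : Set ℕ+ :=
  Subtype.val '' (@closure (Np p) (padicTop p) (Subtype.val ⁻¹' A))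

/-- `a^ℕ = {a^k : k ∈ ℕ}`, the set of positive powers of `a`. -/
def powSet (a : ℕ) : Set ℕ+ := {y : ℕ+ | ∃ k : ℕ, 0 < k ∧ (y : ℕ) = a ^ k}

/-- The closure of `a^ℕ` in the `p`-adic topology on `ℕ \ pℕ`. -/
def clPow (p a : ℕ) : Set ℕ+ := padicClosure p (powSet a)

/-- The family `𝒳_p` of closures of the sets `a^ℕ` for `a ∈ ℕ \ pℕ`, `a ≠ 1`. -/
def XX (p : ℕ) : Set (Set ℕ+) := {X | ∃ a : ℕ, 0 < a ∧ a ≠ 1 ∧ ¬ p ∣ a ∧ X = clPow p a}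

/-- The projection `π_n(X)` of a set of positive integers to `ℤ/p^nℤ`. -/
def pin (p n : ℕ) (X : Set ℕ+) : Set (ZMod (p ^ n)) :=
  (fun y : ℕ+ => ((y : ℕ) : ZMod (p ^ n))) '' X

/-- `n(X)`: the least `n ∈ ℕ` with `X = ℕ ∩ π_n⁻¹(π_n(X))` and `|π_n(X)| ≥ max(p,3)`. -/
noncomputable def nX (p : ℕ) (X : Set ℕ+) : ℕ :=
  sInf {n : ℕ | 0 < n ∧ X = {y : ℕ+ | ((y : ℕ) : ZMod (p ^ n)) ∈ pin p n X} ∧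
    max p 3 ≤ (pin p n X).ncard}

/-- `i(X)`: the index of the subgroup `π_{n(X)}(X)` in the group of units of `ℤ/p^{n(X)}ℤ`. -/
noncomputable def iX (p : ℕ) (X : Set ℕ+) : ℕ :=
  Nat.card ((ZMod (p ^ nX p X))ˣ) / (pin p (nX p X) X).ncard

open Filter Topology

/-! ### The Golomb topology -/

lemma mem_golombBasic_self (x : ℕ+) (b : ℕ) : x ∈ golombBasic x b := ⟨0, by simp⟩

lemma golombBasic_subset_of_dvd {a b c : ℕ} (h : b ∣ c) : golombBasic a c ⊆ golombBasic a b := by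
  rintro z ⟨n, hn⟩
  obtain ⟨d, rfl⟩ := h
  exact ⟨d * n, by rw [hn, mul_assoc]⟩

lemma golombBasic_subset_of_mem {a b : ℕ} {x : ℕ+} (hx : x ∈ golombBasic a b) :
    golombBasic x b ⊆ golombBasic a b := by
  obtain ⟨m, hm⟩ := hx
  rintro z ⟨n, hn⟩
  exact ⟨m + n, by rw [hn, hm]; ring⟩

lemma modEq_of_mem_golombBasic {a b : ℕ} {z : ℕ+} (h : z ∈ golombBasic a b) :
    (z : ℕ) ≡ a [MOD b] := by
  obtain ⟨n, hn⟩ := h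
  simp [hn, Nat.ModEq]

lemma mem_golombBasic_of_modEq {a b : ℕ} {z : ℕ+} (haz : a ≤ z) (h : (z : ℕ) ≡ a [MOD b]) :
    z ∈ golombBasic a b := by
  obtain ⟨n, hn⟩ := (Nat.modEq_iff_dvd' haz).1 h.symm
  exact ⟨n, by omega⟩

lemma isOpen_golombBasic {a : ℕ+} {b : ℕ} (hb : 0 < b) (hab : Nat.Coprime a b) :
    IsOpen (golombBasic a b) :=
  isOpen_generateFrom_of_mem ⟨a, b, a.pos, hb, hab, rfl⟩

lemma isTopologicalBasis_golombBasic :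
    IsTopologicalBasis
      {S : Set ℕ+ | ∃ a b : ℕ, 0 < a ∧ 0 < b ∧ Nat.Coprime a b ∧ S = golombBasic a b} where
  exists_subset_inter := by
    rintro _ ⟨a, b, -, hb, hab, rfl⟩ _ ⟨c, d, -, hd, hcd, rfl⟩ x ⟨hxb, hxd⟩
    have hxb' : Nat.Coprime x b := by rwa [Nat.Coprime, (modEq_of_mem_golombBasic hxb).gcd_eq]
    have hxd' : Nat.Coprime x d := by rwa [Nat.Coprime, (modEq_of_mem_golombBasic hxd).gcd_eq]
    exact ⟨_, ⟨x, b * d, x.pos, Nat.mul_pos hb hd, hxb'.mul_right hxd', rfl⟩,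
      mem_golombBasic_self x _, Set.subset_inter
        ((golombBasic_subset_of_dvd (dvd_mul_right b d)).trans (golombBasic_subset_of_mem hxb))
        ((golombBasic_subset_of_dvd (dvd_mul_left d b)).trans (golombBasic_subset_of_mem hxd))⟩
  sUnion_eq := Set.eq_univ_of_forall fun x =>
    ⟨_, ⟨x, 1, x.pos, one_pos, Nat.coprime_one_right _, rfl⟩, mem_golombBasic_self x 1⟩
  eq_generateFrom := rfl

lemma nhds_hasBasis_golombBasic (x : ℕ+) :
    (𝓝 x).HasBasis (fun b : ℕ => 0 < b ∧ Nat.Coprime x b) (golombBasic x) := by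
  refine isTopologicalBasis_golombBasic.nhds_hasBasis.to_hasBasis ?_ fun b hb =>
    ⟨_, ⟨⟨x, b, x.pos, hb.1, hb.2, rfl⟩, mem_golombBasic_self x b⟩, subset_rfl⟩
  rintro _ ⟨⟨a, b, -, hb, hab, rfl⟩, hx⟩
  exact ⟨b, ⟨hb, by rwa [Nat.Coprime, (modEq_of_mem_golombBasic hx).gcd_eq]⟩,
    golombBasic_subset_of_mem hx⟩

lemma golombBasic_inter_nonempty {a b c d : ℕ} (hb : 0 < b) (hd : 0 < d)
    (h : a ≡ c [MOD b.gcd d]) : (golombBasic a b ∩ golombBasic c d).Nonempty := by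
  obtain ⟨k, hka, hkc⟩ := Nat.chineseRemainder' h
  -- The summand `b * d * (a + c + 1)` lifts `k` above both starting points.
  have hlarge : a + c + 1 ≤ k + b * d * (a + c + 1) :=
    (Nat.le_mul_of_pos_left _ (Nat.mul_pos hb hd)).trans (Nat.le_add_left _ _)
  refine ⟨⟨k + b * d * (a + c + 1), by omega⟩,
    mem_golombBasic_of_modEq (by rw [PNat.mk_coe]; omega) ?_,
    mem_golombBasic_of_modEq (by rw [PNat.mk_coe]; omega) ?_⟩
  · exact (show k + b * d * (a + c + 1) ≡ k [MOD b] by simp [Nat.ModEq, mul_assoc]).trans hka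
  · exact (show k + b * d * (a + c + 1) ≡ k [MOD d] by
      simp [Nat.ModEq, mul_comm b d, mul_assoc]).trans hkc

lemma mem_closure_golombBasic_iff {u : ℕ+} {a b : ℕ} (hb : 0 < b) :
    u ∈ closure (golombBasic a b) ↔ ∀ e, e ∣ b → Nat.Coprime u e → (u : ℕ) ≡ a [MOD e] := by
  rw [mem_closure_iff_nhds_basis (nhds_hasBasis_golombBasic u)]
  refine ⟨fun h e heb hue => ?_, fun h c ⟨hc, huc⟩ => ?_⟩
  · obtain ⟨z, hza, hzu⟩ := h e ⟨Nat.pos_of_dvd_of_pos heb hb, hue⟩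
    exact (modEq_of_mem_golombBasic hzu).symm.trans ((modEq_of_mem_golombBasic hza).of_dvd heb)
  · exact golombBasic_inter_nonempty hb hc (h _ (Nat.gcd_dvd_left b c)
      (huc.coprime_dvd_right (Nat.gcd_dvd_right b c))).symm

lemma coprime_prime_pow_of_not_dvd {p a : ℕ} (hp : p.Prime) (ha : ¬ p ∣ a) (n : ℕ) :
    a.Coprime (p ^ n) :=
  ((hp.coprime_iff_not_dvd.2 ha).symm).pow_right n

lemma not_dvd_of_modEq_pow_succ {p n a b : ℕ} (hab : a ≡ b [MOD p ^ (n + 1)]) (hb : ¬ p ∣ b) :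
    ¬ p ∣ a :=
  fun ha => hb ((hab.dvd_iff (dvd_pow_self p n.succ_ne_zero)).1 ha)

lemma setOf_dvd_or_modEq_mem_lift'_closure {p : ℕ} (hp : p.Prime) {x : ℕ+} (hx : ¬ p ∣ (x : ℕ))
    (n : ℕ) : {u : ℕ+ | p ∣ u ∨ (u : ℕ) ≡ x [MOD p ^ n]} ∈ (𝓝 x).lift' closure := by
  have hpn := pow_pos hp.pos n
  refine mem_of_superset (mem_lift' ((nhds_hasBasis_golombBasic x).mem_of_mem
    ⟨hpn, coprime_prime_pow_of_not_dvd hp hx n⟩)) fun u hu => or_iff_not_imp_left.2 fun hpu => ?_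
  exact (mem_closure_golombBasic_iff hpn).1 hu _ dvd_rfl (coprime_prime_pow_of_not_dvd hp hpu n)

/-- At a prime `p`, closed neighbourhoods of `x` impose no condition if `p ∣ x`, and only a
congruence modulo a power of `p` otherwise; the other primes are neutralised by `D ∣ u`. -/
lemma exists_of_mem_lift'_closure {p : ℕ} (hp : p.Prime) {x : ℕ+} {S : Set ℕ+}
    (hS : S ∈ (𝓝 x).lift' closure) : ∃ m D, ¬ p ∣ D ∧
      ∀ u : ℕ+, D ∣ u → (p ∣ x ∨ (u : ℕ) ≡ x [MOD p ^ m]) → u ∈ S := by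
  obtain ⟨b, ⟨hb, hxb⟩, hbS⟩ := (nhds_hasBasis_golombBasic x).lift'_closure.mem_iff.1 hS
  obtain ⟨m, D, hD, rfl⟩ := Nat.exists_eq_pow_mul_and_not_dvd hb.ne' p hp.ne_one
  refine ⟨m, D, hD, fun u hDu hux => hbS ((mem_closure_golombBasic_iff hb).2 fun e he hue => ?_)⟩
  have hem : e ∣ p ^ m := (hue.symm.coprime_dvd_right hDu).dvd_of_dvd_mul_right he
  rcases hux with hpx | hux
  · have hm : m = 0 := by
      by_contra hm
      exact Nat.not_coprime_of_dvd_of_dvd hp.one_lt hpx (dvd_mul_of_dvd_left (dvd_pow_self p hm) D)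
        hxb
    rw [show e = 1 by simpa [hm] using hem]
    exact Nat.modEq_one
  · exact hux.of_dvd hem

lemma exists_pnat_modEq_and_dvd {m D : ℕ} (hm : 0 < m) (hD : 0 < D) (h : m.Coprime D) (t : ℕ) :
    ∃ u : ℕ+, (u : ℕ) ≡ t [MOD m] ∧ D ∣ u := by
  obtain ⟨u, hut, huD⟩ := golombBasic_inter_nonempty (a := t) (c := 0) hm hD
    (by rw [h]; exact Nat.modEq_one)
  exact ⟨u, modEq_of_mem_golombBasic hut,
    (Nat.modEq_zero_iff_dvd).1 (modEq_of_mem_golombBasic huD)⟩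

/-! ### Coprimality is a topological relation -/

/-- Three points are concentrated if the closure of every nonempty open set contains an
intersection of closed neighbourhoods of the three points. -/
def Concentrated {X : Type*} [TopologicalSpace X] (x y z : X) : Prop :=
  ∀ W : Set X, IsOpen W → W.Nonempty →
    closure W ∈ (𝓝 x).lift' closure ⊓ (𝓝 y).lift' closure ⊓ (𝓝 z).lift' closure

lemma Concentrated.map {X Y : Type*} [TopologicalSpace X] [TopologicalSpace Y] (h : X ≃ₜ Y)
    {x y z : X} (hc : Concentrated x y z) : Concentrated (h x) (h y) (h z) := by
  intro W hW hWne
  have htendsto : ∀ a, Tendsto h.symm ((𝓝 (h a)).lift' closure) ((𝓝 a).lift' closure) :=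
    fun a => by simpa using tendsto_lift'_closure_nhds h.symm.continuous (h a)
  have hmem := ((htendsto x).inf (htendsto y)).inf (htendsto z)
    (hc _ (hW.preimage h.continuous) (hWne.preimage h.surjective))
  rwa [mem_map, ← h.preimage_closure, ← Set.preimage_comp, h.self_comp_symm, Set.preimage_id]
    at hmem

lemma setOf_dvd_mem_lift'_closure_inf {p : ℕ} (hp : p.Prime) {x y : ℕ+} (hxy : x ≠ y)
    (hx : ¬ p ∣ (x : ℕ)) (hy : ¬ p ∣ (y : ℕ)) :
    {u : ℕ+ | p ∣ u} ∈ (𝓝 x).lift' closure ⊓ (𝓝 y).lift' closure := by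
  have hlt (v : ℕ+) (hv : v ≤ x + y) : (v : ℕ) < p ^ ((x + y : ℕ+) : ℕ) :=
    (Nat.lt_pow_self hp.one_lt).trans_le (Nat.pow_le_pow_right hp.pos hv)
  refine mem_of_superset (inter_mem_inf
    (setOf_dvd_or_modEq_mem_lift'_closure hp hx ((x + y : ℕ+) : ℕ))
    (setOf_dvd_or_modEq_mem_lift'_closure hp hy ((x + y : ℕ+) : ℕ))) ?_
  rintro u ⟨hpu | hux, hpu' | huy⟩
  · exact hpu
  · exact hpu
  · exact hpu'
  · exact absurd (PNat.coe_injective ((hux.symm.trans huy).eq_of_lt_of_lt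
      (hlt x (PNat.lt_add_right x y).le) (hlt y (PNat.lt_add_left y x).le))) hxy

lemma mem_closure_golombBasic_of_forall_prime_dvd {u : ℕ+} {a b : ℕ} (hb : 0 < b)
    (h : ∀ p ∈ b.primeFactors, p ∣ u) : u ∈ closure (golombBasic a b) := by
  refine (mem_closure_golombBasic_iff hb).2 fun e heb hue => ?_
  obtain rfl : e = 1 := by
    by_contra he
    obtain ⟨p, hp, hpe⟩ := Nat.exists_prime_and_dvd he
    exact Nat.not_coprime_of_dvd_of_dvd hp.one_lt
      (h p (Nat.mem_primeFactors.2 ⟨hp, hpe.trans heb, hb.ne'⟩)) hpe hue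
  exact Nat.modEq_one

/-- The multiples of the radical of `b` lie in the closure of any progression with difference `b`,
and each prime factor of `b` fails to divide two of the three points. -/
lemma concentrated_of_coprime {x y z : ℕ+} (hxy : x ≠ y) (hxz : x ≠ z) (hyz : y ≠ z)
    (cxy : Nat.Coprime x y) (cxz : Nat.Coprime x z) (cyz : Nat.Coprime y z) :
    Concentrated x y z := by
  intro W hW ⟨w, hw⟩
  obtain ⟨b, ⟨hb, -⟩, hbW⟩ := (nhds_hasBasis_golombBasic w).mem_iff.1 (hW.mem_nhds hw)
  have hdvd : ∀ p ∈ b.primeFactors, {u : ℕ+ | p ∣ u} ∈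
      (𝓝 x).lift' closure ⊓ (𝓝 y).lift' closure ⊓ (𝓝 z).lift' closure := by
    intro p hp
    replace hp := Nat.prime_of_mem_primeFactors hp
    have not_dvd {v v' : ℕ+} (hvv' : Nat.Coprime v v') (hv : p ∣ v) : ¬ p ∣ (v' : ℕ) :=
      fun hv' => Nat.not_coprime_of_dvd_of_dvd hp.one_lt hv hv' hvv'
    by_cases hpx : p ∣ x
    · exact inf_le_inf_right ((𝓝 z).lift' closure) inf_le_right
        (setOf_dvd_mem_lift'_closure_inf hp hyz (not_dvd cxy hpx) (not_dvd cxz hpx))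
    · by_cases hpy : p ∣ y
      · exact inf_le_inf_right ((𝓝 z).lift' closure) inf_le_left
          (setOf_dvd_mem_lift'_closure_inf hp hxz hpx (not_dvd cyz hpy))
      · exact mem_inf_of_left (setOf_dvd_mem_lift'_closure_inf hp hxy hpx hpy)
  refine mem_of_superset ((biInter_finset_mem b.primeFactors).2 hdvd) fun u hu =>
    closure_mono hbW (mem_closure_golombBasic_of_forall_prime_dvd hb ?_)
  simpa using hu

/-- If a prime `p` divided `x` and `y`, the closed neighbourhoods of `x`, `y`, `z` would meet in a
point congruent to some `t` prime to `p` modulo `p ^ 2`, hence outside the closure of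
`t + p + p ^ 2 ℕ₀`. -/
lemma Concentrated.coprime {x y z : ℕ+} (hc : Concentrated x y z) : Nat.Coprime x y := by
  by_contra hxy
  obtain ⟨p, hp, hpx, hpy⟩ := Nat.Prime.not_coprime_iff_dvd.1 hxy
  obtain ⟨t, hpt, htz⟩ : ∃ t : ℕ+, ¬ p ∣ (t : ℕ) ∧ (p ∣ z ∨ t = z) := by
    by_cases hpz : p ∣ z
    · exact ⟨1, hp.not_dvd_one, Or.inl hpz⟩
    · exact ⟨z, hpz, Or.inr rfl⟩
  lift p to ℕ+ using hp.pos
  have hpw : ¬ (p : ℕ) ∣ (t + p : ℕ+) := by simpa using hpt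
  obtain ⟨A, hA, C, hC, hAC⟩ := mem_inf_iff_superset.1 <|
    hc _ (isOpen_golombBasic (pow_pos hp.pos 2) (coprime_prime_pow_of_not_dvd hp hpw 2))
      ⟨_, mem_golombBasic_self _ _⟩
  obtain ⟨A₁, hA₁, A₂, hA₂, hA₁₂⟩ := mem_inf_iff_superset.1 hA
  obtain ⟨m₁, D₁, hD₁, h₁⟩ := exists_of_mem_lift'_closure hp hA₁
  obtain ⟨m₂, D₂, hD₂, h₂⟩ := exists_of_mem_lift'_closure hp hA₂
  obtain ⟨m, D, hD, h₃⟩ := exists_of_mem_lift'_closure hp hC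
  have hDDD : ¬ (p : ℕ) ∣ D₁ * D₂ * D := hp.not_dvd_mul (hp.not_dvd_mul hD₁ hD₂) hD
  obtain ⟨u, hut, hDu⟩ := exists_pnat_modEq_and_dvd (pow_pos hp.pos (m + 2))
    (Nat.pos_of_ne_zero fun h => hDDD (by simp [h]))
    (coprime_prime_pow_of_not_dvd hp hDDD (m + 2)).symm t
  have huC : (p : ℕ) ∣ z ∨ (u : ℕ) ≡ z [MOD p ^ m] :=
    htz.imp_right fun htz : t = z => htz ▸ hut.of_dvd (pow_dvd_pow _ (Nat.le_add_right m 2))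
  have huW := hAC ⟨hA₁₂
    ⟨h₁ u (((dvd_mul_right D₁ D₂).mul_right D).trans hDu) (Or.inl hpx),
      h₂ u (((dvd_mul_left D₂ D₁).mul_right D).trans hDu) (Or.inl hpy)⟩,
    h₃ u ((dvd_mul_left D _).trans hDu) huC⟩
  have hutw := (mem_closure_golombBasic_iff (pow_pos hp.pos 2)).1 huW _ dvd_rfl
    (coprime_prime_pow_of_not_dvd hp (not_dvd_of_modEq_pow_succ hut hpt) 2)
  have htw : (t : ℕ) ≡ t + p [MOD p ^ 2] :=
    (hut.of_dvd (pow_dvd_pow _ (Nat.le_add_left 2 m))).symm.trans (by simpa using hutw)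
  have : (p : ℕ) ^ 2 ∣ p ^ 1 := by simpa using (Nat.modEq_iff_dvd' (Nat.le_add_right _ p)).1 htw
  exact absurd ((Nat.pow_dvd_pow_iff_le_right hp.one_lt).1 this) (by simp)

lemma coprime_iff_exists_concentrated {x y : ℕ+} (hxy : x ≠ y) :
    Nat.Coprime x y ↔ ∃ z, Concentrated x y z := by
  refine ⟨fun cxy => ⟨x * y + 1, ?_⟩, fun ⟨z, hz⟩ => hz.coprime⟩
  have hlt : x < x * y + 1 ∧ y < x * y + 1 :=
    ⟨PNat.lt_add_one_iff.2 (by simp),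
      PNat.lt_add_one_iff.2 (by simp)⟩
  exact concentrated_of_coprime hxy hlt.1.ne hlt.2.ne cxy (by simp) (by simp)

lemma coprime_map_iff_of_ne (h : ℕ+ ≃ₜ ℕ+) {x y : ℕ+} (hxy : x ≠ y) :
    Nat.Coprime (h x) (h y) ↔ Nat.Coprime x y := by
  rw [coprime_iff_exists_concentrated hxy,
    coprime_iff_exists_concentrated (h.injective.ne hxy)]
  exact ⟨fun ⟨z, hz⟩ => ⟨h.symm z, by simpa using hz.map h.symm⟩, fun ⟨z, hz⟩ => ⟨h z, hz.map h⟩⟩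

/-- The image of `1` is coprime to every other number, for instance to its own double. -/
lemma map_one_eq (h : ℕ+ ≃ₜ ℕ+) : h 1 = 1 := by
  obtain ⟨z, hz⟩ := h.surjective (2 * h 1)
  have hz1 : 1 ≠ z := by
    rintro rfl
    simp at hz
  have hcop : Nat.Coprime (h 1) (2 * h 1) := by
    simpa [hz] using (coprime_map_iff_of_ne h hz1).2 (by simp)
  exact PNat.coe_injective (hcop.eq_one_of_dvd (dvd_mul_left _ 2))

lemma apply_eq_one_iff (h : ℕ+ ≃ₜ ℕ+) {x : ℕ+} : h x = 1 ↔ x = 1 := by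
  rw [← h.injective.eq_iff (a := x), map_one_eq]

lemma coprime_map_iff (h : ℕ+ ≃ₜ ℕ+) {x y : ℕ+} :
    Nat.Coprime (h x) (h y) ↔ Nat.Coprime x y := by
  rcases eq_or_ne x y with rfl | hxy
  · simpa using apply_eq_one_iff h
  · exact coprime_map_iff_of_ne h hxy

/-! ### The induced permutation of the primes -/

/-- The correspondence `p ↦ q` of primes induced by a homeomorphism `h` of the Golomb space: `h`
maps the multiples of `p` onto the multiples of `q`. -/
structure PrimeCorr (h : ℕ+ ≃ₜ ℕ+) (p q : ℕ) : Prop where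
  prime_left : p.Prime
  prime_right : q.Prime
  dvd_iff (x : ℕ+) : p ∣ x ↔ q ∣ h x

lemma mem_powSet_prime_iff {p : ℕ} (hp : p.Prime) {x : ℕ+} :
    x ∈ powSet p ↔ x ≠ 1 ∧ ∀ z : ℕ+, ¬ p ∣ z → Nat.Coprime x z := by
  constructor
  · rintro ⟨k, hk, hx⟩
    refine ⟨?_, fun z hz => hx ▸ (coprime_prime_pow_of_not_dvd hp hz k).symm⟩
    rintro rfl
    exact (Nat.one_lt_pow hk.ne' hp.one_lt).ne hx
  · rintro ⟨hx1, hx⟩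
    have hpow : (x : ℕ) = p ^ (x : ℕ).primeFactorsList.length :=
      Nat.eq_prime_pow_of_unique_prime_dvd x.ne_zero fun {d} hd hdx => by
        by_contra hdp
        have hpd : ¬ p ∣ d := fun hpd => hdp ((Nat.prime_dvd_prime_iff_eq hp hd).1 hpd).symm
        exact Nat.not_coprime_of_dvd_of_dvd hd.one_lt hdx dvd_rfl (hx ⟨d, hd.pos⟩ hpd)
    refine ⟨_, Nat.pos_of_ne_zero fun hk => hx1 (PNat.coe_injective ?_), hpow⟩
    simpa [hk] using hpow

lemma exists_primeCorr (h : ℕ+ ≃ₜ ℕ+) {p : ℕ} (hp : p.Prime) : ∃ q, PrimeCorr h p q := by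
  lift p to ℕ+ using hp.pos
  have hp1 : h p ≠ 1 := fun hp1 => hp.ne_one (by rw [(apply_eq_one_iff h).1 hp1, PNat.one_coe])
  obtain ⟨q, hq, hqp⟩ := Nat.exists_prime_and_dvd (mt PNat.coe_eq_one_iff.1 hp1)
  lift q to ℕ+ using hq.pos
  obtain ⟨w, rfl⟩ := h.surjective q
  have hw : w ∈ powSet p := (mem_powSet_prime_iff hp).2
    ⟨fun hw => hq.ne_one (by rw [hw, map_one_eq, PNat.one_coe]), fun z hz =>
      (coprime_map_iff h).1 (((coprime_map_iff h).2
        (hp.coprime_iff_not_dvd.2 hz)).coprime_dvd_left hqp)⟩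
  obtain ⟨k, hk, hwk⟩ := hw
  refine ⟨h w, hp, hq, fun x => ?_⟩
  have hwx : Nat.Coprime w x ↔ Nat.Coprime p x := by
    rw [hwk, Nat.coprime_pow_left_iff hk]
  rw [← not_iff_not, ← hp.coprime_iff_not_dvd, ← hq.coprime_iff_not_dvd, coprime_map_iff, hwx]

namespace PrimeCorr

variable {h : ℕ+ ≃ₜ ℕ+} {p q r s : ℕ}

lemma symm (hpq : PrimeCorr h p q) : PrimeCorr h.symm q p where
  prime_left := hpq.prime_right
  prime_right := hpq.prime_left
  dvd_iff x := by rw [hpq.dvd_iff (h.symm x), h.apply_symm_apply]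

lemma left_unique (hpq : PrimeCorr h p q) (hrq : PrimeCorr h r q) : p = r :=
  have hdvd : r ∣ (⟨p, hpq.prime_left.pos⟩ : ℕ+) :=
    (hrq.dvd_iff _).2 ((hpq.dvd_iff _).1 dvd_rfl)
  ((Nat.prime_dvd_prime_iff_eq hrq.prime_left hpq.prime_left).1 hdvd).symm

lemma mem_powSet_iff (hpq : PrimeCorr h p q) {x : ℕ+} : h x ∈ powSet q ↔ x ∈ powSet p := by
  rw [mem_powSet_prime_iff hpq.prime_left, mem_powSet_prime_iff hpq.prime_right, ne_eq,
    apply_eq_one_iff, h.surjective.forall]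
  simp only [← hpq.dvd_iff, coprime_map_iff]

lemma image_powSet (hpq : PrimeCorr h p q) : h '' powSet p = powSet q := by
  rw [h.image_eq_preimage_symm]
  ext y
  rw [Set.mem_preimage, ← hpq.mem_powSet_iff, h.apply_symm_apply]

end PrimeCorr

/-! ### The `p`-adic topologies are determined by the Golomb topology -/

lemma nhds_hasBasis_padicTop {p : ℕ} (hp : p.Prime) (y : Np p) :
    (@nhds _ (padicTop p) y).HasBasis (fun _ : ℕ => True)
      fun n => {z : Np p | ((z : ℕ+) : ℕ) ≡ (y : ℕ+) [MOD p ^ n]} := by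
  have hanti : Antitone fun n => {z : Np p | ((z : ℕ+) : ℕ) ≡ (y : ℕ+) [MOD p ^ n]} :=
    fun m n hmn z hz => hz.of_dvd (pow_dvd_pow p hmn)
  convert hasBasis_iInf_principal hanti.directed_ge using 1
  refine nhds_generateFrom.trans ?_
  refine le_antisymm (le_iInf fun n => ?_) (le_iInf₂ fun s hs => ?_)
  · refine iInf₂_le_of_le {z : Np p | ∃ k, ((z : ℕ+) : ℕ) = (y : ℕ+) + p ^ (n + 1) * k}
      ⟨⟨0, by simp⟩, _, _, (y : ℕ+).pos, n.succ_pos, rfl⟩ (principal_mono.2 ?_)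
    rintro z ⟨k, hk⟩
    exact hanti n.le_succ (show _ ≡ _ [MOD p ^ (n + 1)] by simp [hk, Nat.ModEq])
  · obtain ⟨hys, x, n, -, -, rfl⟩ := hs
    obtain ⟨k, hk⟩ := hys
    -- A number congruent to `y` modulo a power of `p` exceeding `y` is at least `y`.
    refine iInf_le_of_le (n + (y : ℕ+)) (principal_mono.2 fun z hz => ?_)
    have hlt : ((y : ℕ+) : ℕ) < p ^ (n + (y : ℕ+) : ℕ) :=
      (Nat.lt_pow_self hp.one_lt).trans_le (Nat.pow_le_pow_right hp.pos (Nat.le_add_left _ _))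
    have hyz : ((y : ℕ+) : ℕ) ≤ (z : ℕ+) := by
      rw [← Nat.mod_eq_of_lt hlt, ← hz]
      exact Nat.mod_le _ _
    have hyx : ((y : ℕ+) : ℕ) ≡ x [MOD p ^ n] := by simp [hk, Nat.ModEq]
    exact mem_golombBasic_of_modEq (by omega) ((hanti (Nat.le_add_right n _) hz).trans hyx)

lemma mem_padicClosure_iff {p : ℕ} (hp : p.Prime) {A : Set ℕ+} {y : ℕ+} :
    y ∈ padicClosure p A ↔ ¬ p ∣ y ∧ ∀ n, ∃ z ∈ A, (z : ℕ) ≡ y [MOD p ^ n] := by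
  let := padicTop p
  have hclosure (hy : ¬ p ∣ (y : ℕ)) : (⟨y, hy⟩ : Np p) ∈ closure (Subtype.val ⁻¹' A) ↔
      ∀ n, ∃ z ∈ A, (z : ℕ) ≡ y [MOD p ^ n] := by
    simp only [mem_closure_iff_nhds_basis (nhds_hasBasis_padicTop hp _), true_imp_iff]
    constructor
    · intro h n
      obtain ⟨z, hzA, hz⟩ := h n
      exact ⟨z, hzA, hz⟩
    · intro h n
      obtain ⟨z, hzA, hz⟩ := h (n + 1)
      exact ⟨⟨z, not_dvd_of_modEq_pow_succ hz hy⟩, hzA, hz.of_dvd (pow_dvd_pow p n.le_succ)⟩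
  constructor
  · rintro ⟨⟨y, hy⟩, hmem, rfl⟩
    exact ⟨hy, (hclosure hy).1 hmem⟩
  · rintro ⟨hy, h⟩
    exact ⟨⟨y, hy⟩, (hclosure hy).2 h, rfl⟩

lemma mem_clPow_iff {p r : ℕ} (hp : p.Prime) {y : ℕ+} :
    y ∈ clPow p r ↔ ¬ p ∣ y ∧ ∀ n, ∃ k, 0 < k ∧ r ^ k ≡ y [MOD p ^ n] := by
  refine (mem_padicClosure_iff hp).trans (and_congr_right fun hy => ⟨fun h n => ?_, fun h n => ?_⟩)
  · obtain ⟨z, ⟨k, hk, hzk⟩, hz⟩ := h n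
    exact ⟨k, hk, hzk ▸ hz⟩
  · obtain ⟨k, hk, hky⟩ := h (n + 1)
    have hne : r ^ k ≠ 0 := fun h0 => not_dvd_of_modEq_pow_succ hky hy (h0 ▸ dvd_zero p)
    exact ⟨⟨r ^ k, Nat.pos_of_ne_zero hne⟩, ⟨k, hk, rfl⟩, hky.of_dvd (pow_dvd_pow p n.le_succ)⟩

/-- A relatively clopen subset of `ℕ \ pℕ` in the Golomb topology is `p`-adically open: closed
neighbourhoods of `p`-adically close points meet outside `pℕ`. -/
lemma exists_forall_modEq_mem {p : ℕ} (hp : p.Prime) {D : Set ℕ+} (hD : IsOpen D)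
    (hDcl : ∀ u ∈ closure D, ¬ p ∣ u → u ∈ D) {y : ℕ+} (hy : y ∈ D) (hpy : ¬ p ∣ (y : ℕ)) :
    ∃ m, ∀ z : ℕ+, z ≡ y [MOD p ^ m] → z ∈ D := by
  obtain ⟨m, E, hE, hmE⟩ := exists_of_mem_lift'_closure hp (mem_lift' (hD.mem_nhds hy))
  refine ⟨m + 1, fun z hzy => ?_⟩
  by_contra hzD
  have hpz : ¬ p ∣ (z : ℕ) := not_dvd_of_modEq_pow_succ hzy hpy
  have hzcl : (closure D)ᶜ ∈ 𝓝 z :=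
    isClosed_closure.isOpen_compl.mem_nhds fun hz => hzD (hDcl z hz hpz)
  obtain ⟨n, F, hF, hnF⟩ := exists_of_mem_lift'_closure hp (mem_lift' hzcl)
  have hEF : ¬ p ∣ E * F := hp.not_dvd_mul hE hF
  obtain ⟨u, huz, hEFu⟩ := exists_pnat_modEq_and_dvd (pow_pos hp.pos (m + n + 1))
    (Nat.pos_of_ne_zero fun h => hEF (by simp [h]))
    (coprime_prime_pow_of_not_dvd hp hEF (m + n + 1)).symm z
  have huD : u ∈ D := hDcl u
    (hmE u (dvd_of_mul_right_dvd hEFu) (Or.inr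
      ((huz.of_dvd (pow_dvd_pow p (by omega))).trans (hzy.of_dvd (pow_dvd_pow p m.le_succ)))))
    (not_dvd_of_modEq_pow_succ huz hpz)
  have hu := hnF u (dvd_of_mul_left_dvd hEFu) (Or.inr (huz.of_dvd (pow_dvd_pow p (by omega))))
  rw [closure_compl] at hu
  exact hu (hD.subset_interior_closure huD)

lemma isOpen_setOf_modEq {a b : ℕ} (hb : 0 < b) (hab : a.Coprime b) :
    IsOpen {z : ℕ+ | z ≡ a [MOD b]} :=
  isOpen_iff_mem_nhds.2 fun z hz => mem_of_superset
    ((nhds_hasBasis_golombBasic z).mem_of_mem ⟨hb, by rwa [Nat.Coprime, Nat.ModEq.gcd_eq hz]⟩)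
    fun _ hu => (modEq_of_mem_golombBasic hu).trans hz

lemma modEq_of_mem_closure_setOf_modEq {a b : ℕ} (hb : 0 < b) {u : ℕ+} (hub : Nat.Coprime u b)
    (hu : u ∈ closure {z : ℕ+ | z ≡ a [MOD b]}) : u ≡ a [MOD b] := by
  obtain ⟨z, hza, hzu⟩ :=
    (mem_closure_iff_nhds_basis (nhds_hasBasis_golombBasic u)).1 hu b ⟨hb, hub⟩
  exact (modEq_of_mem_golombBasic hzu).symm.trans hza

namespace PrimeCorr

variable {h : ℕ+ ≃ₜ ℕ+} {p q r s : ℕ}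

lemma exists_forall_modEq_map (hpq : PrimeCorr h p q) {y : ℕ+} (hpy : ¬ p ∣ (y : ℕ)) (n : ℕ) :
    ∃ m, ∀ z : ℕ+, z ≡ y [MOD p ^ m] → h z ≡ h y [MOD q ^ n] := by
  have hq := hpq.prime_right
  have coprime_map (u : ℕ+) (hu : ¬ p ∣ (u : ℕ)) : Nat.Coprime (h u) (q ^ n) :=
    coprime_prime_pow_of_not_dvd hq ((hpq.dvd_iff u).not.1 hu) n
  have hqn := pow_pos hq.pos n
  refine exists_forall_modEq_mem hpq.prime_left (D := h ⁻¹' {z | z ≡ h y [MOD q ^ n]})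
    ((isOpen_setOf_modEq hqn (coprime_map y hpy)).preimage h.continuous) (fun u hu hpu => ?_)
    (Nat.ModEq.refl _) hpy
  rw [← h.preimage_closure] at hu
  exact modEq_of_mem_closure_setOf_modEq hqn (coprime_map u hpu) hu

lemma map_mem_padicClosure (hpq : PrimeCorr h p q) {A : Set ℕ+} {y : ℕ+}
    (hy : y ∈ padicClosure p A) : h y ∈ padicClosure q (h '' A) := by
  obtain ⟨hpy, hyA⟩ := (mem_padicClosure_iff hpq.prime_left).1 hy
  refine (mem_padicClosure_iff hpq.prime_right).2 ⟨(hpq.dvd_iff y).not.1 hpy, fun n => ?_⟩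
  obtain ⟨m, hm⟩ := hpq.exists_forall_modEq_map hpy n
  obtain ⟨z, hzA, hzy⟩ := hyA m
  exact ⟨h z, Set.mem_image_of_mem h hzA, hm z hzy⟩

lemma map_mem_clPow_iff (hpq : PrimeCorr h p q) (hrs : PrimeCorr h r s) {y : ℕ+} :
    h y ∈ clPow q s ↔ y ∈ clPow p r := by
  simp only [clPow]
  constructor <;> intro hy
  · simpa [hrs.symm.image_powSet] using hpq.symm.map_mem_padicClosure hy
  · simpa [hrs.image_powSet] using hpq.map_mem_padicClosure hy

end PrimeCorr

/-! ### Orders of residues and `p`-adic closures of cyclic semigroups -/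

lemma mem_zpowers_iff_orderOf_dvd {G : Type*} [CommGroup G] [Finite G] [IsCyclic G] {g x : G} :
    x ∈ Subgroup.zpowers g ↔ orderOf x ∣ orderOf g := by
  refine ⟨orderOf_dvd_of_mem_zpowers, fun hx => ?_⟩
  have hle : Subgroup.zpowers g ≤ (powMonoidHom (orderOf g) : G →* G).ker := by
    rw [Subgroup.zpowers_le, MonoidHom.mem_ker, powMonoidHom_apply, pow_orderOf_eq_one]
  have hcard : Nat.card (powMonoidHom (orderOf g) : G →* G).ker = orderOf g := by
    rw [IsCyclic.card_powMonoidHom_ker, Nat.gcd_eq_right (orderOf_dvd_natCard g)]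
  rw [Subgroup.eq_of_le_of_card_ge hle (by rw [hcard, Nat.card_zpowers])]
  exact orderOf_dvd_iff_pow_eq_one.1 hx

lemma exists_pow_modEq_iff_mem_zpowers {N r y : ℕ} [NeZero N] (hr : r.Coprime N)
    (hy : y.Coprime N) : (∃ k, 0 < k ∧ r ^ k ≡ y [MOD N]) ↔
      ZMod.unitOfCoprime y hy ∈ Subgroup.zpowers (ZMod.unitOfCoprime r hr) := by
  have hpow (k : ℕ) :
      r ^ k ≡ y [MOD N] ↔ ZMod.unitOfCoprime r hr ^ k = ZMod.unitOfCoprime y hy := by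
    simp [Units.ext_iff, ← ZMod.natCast_eq_natCast_iff]
  simp only [← mem_powers_iff_mem_zpowers, Submonoid.mem_powers_iff, hpow]
  constructor
  · rintro ⟨k, -, hk⟩
    exact ⟨k, hk⟩
  · rintro ⟨k, hk⟩
    refine ⟨k + orderOf (ZMod.unitOfCoprime r hr), Nat.add_pos_right _ (orderOf_pos _), ?_⟩
    rw [pow_add, pow_orderOf_eq_one, mul_one, hk]

lemma exists_pow_modEq_iff_orderOf_dvd {N r y : ℕ} [NeZero N] [IsCyclic (ZMod N)ˣ]
    (hr : r.Coprime N) (hy : y.Coprime N) :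
    (∃ k, 0 < k ∧ r ^ k ≡ y [MOD N]) ↔ orderOf (y : ZMod N) ∣ orderOf (r : ZMod N) := by
  rw [exists_pow_modEq_iff_mem_zpowers hr hy, mem_zpowers_iff_orderOf_dvd, ← orderOf_units,
    ← orderOf_units, ZMod.coe_unitOfCoprime, ZMod.coe_unitOfCoprime]

lemma isCyclic_units_of_forall_exists_pow_modEq {N r : ℕ} [NeZero N]
    (h : ∀ y : ℕ, y.Coprime N → ∃ k, 0 < k ∧ r ^ k ≡ y [MOD N]) : IsCyclic (ZMod N)ˣ := by
  obtain ⟨k, hk, hrk⟩ := h 1 (Nat.coprime_one_left N)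
  have hr : r.Coprime N := by
    rw [← Nat.coprime_pow_left_iff hk, Nat.Coprime, hrk.gcd_eq, Nat.gcd_one_left]
  refine ⟨ZMod.unitOfCoprime r hr, fun u => ?_⟩
  have hu := ZMod.val_coe_unit_coprime u
  have hux : ZMod.unitOfCoprime (u : ZMod N).val hu = u := by simp [Units.ext_iff]
  exact hux ▸ (exists_pow_modEq_iff_mem_zpowers hr hu).1 (h _ hu)

lemma exists_prime_orderOf_eq {N e : ℕ} [NeZero N] [IsCyclic (ZMod N)ˣ] (he : e ∣ N.totient) :
    ∃ r : ℕ, r.Prime ∧ r.Coprime N ∧ orderOf (r : ZMod N) = e := by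
  have hcard : Nat.card (ZMod N)ˣ = N.totient := by
    rw [Nat.card_eq_fintype_card, ZMod.card_units_eq_totient]
  obtain ⟨g, hg⟩ := IsCyclic.exists_ofOrder_eq_natCard (α := (ZMod N)ˣ)
  obtain ⟨r, -, hr, hrg⟩ :=
    Nat.forall_exists_prime_gt_and_eq_mod (g ^ (orderOf g / e)).isUnit 0
  refine ⟨r, hr, (ZMod.isUnit_iff_coprime r N).1 (hrg ▸ Units.isUnit _), ?_⟩
  rw [hrg, orderOf_units, orderOf_pow_orderOf_div (orderOf_pos g).ne' (by rwa [hg, hcard])]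

lemma orderOf_natCast_dvd_of_dvd {m n : ℕ} (h : m ∣ n) (x : ℕ) :
    orderOf (x : ZMod m) ∣ orderOf (x : ZMod n) := by
  simpa using orderOf_map_dvd (ZMod.castHom h (ZMod m) : ZMod n →* ZMod m) x

lemma orderOf_natCast_dvd_iff {N x d : ℕ} : orderOf (x : ZMod N) ∣ d ↔ x ^ d ≡ 1 [MOD N] := by
  rw [orderOf_dvd_iff_pow_eq_one, ← ZMod.natCast_eq_natCast_iff, Nat.cast_pow, Nat.cast_one]

lemma orderOf_dvd_mul_pow {p x d : ℕ} (hx : x ^ d ≡ 1 [MOD p]) (n : ℕ) :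
    orderOf (x : ZMod (p ^ (n + 1))) ∣ d * p ^ n := by
  rw [orderOf_natCast_dvd_iff, Nat.modEq_iff_dvd, pow_mul]
  simpa using dvd_sub_pow_of_dvd_sub (Nat.modEq_iff_dvd.1 hx) n

lemma exists_orderOf_eq_mul_pow {p : ℕ} (hp : p.Prime) (x n : ℕ) :
    ∃ a ≤ n, orderOf (x : ZMod (p ^ (n + 1))) = orderOf (x : ZMod p) * p ^ a := by
  have hdvd := orderOf_dvd_mul_pow (orderOf_natCast_dvd_iff.1 (dvd_refl (orderOf (x : ZMod p)))) n
  obtain ⟨c, hc⟩ := orderOf_natCast_dvd_of_dvd (dvd_pow_self p n.succ_ne_zero) x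
  rw [hc] at hdvd ⊢
  rcases Nat.eq_zero_or_pos (orderOf (x : ZMod p)) with h0 | hpos
  · exact ⟨0, n.zero_le, by simp [h0]⟩
  · obtain ⟨a, han, rfl⟩ := (Nat.dvd_prime_pow hp).1 (Nat.dvd_of_mul_dvd_mul_left hpos hdvd)
    exact ⟨a, han, rfl⟩

lemma orderOf_natCast_pos {N x : ℕ} [NeZero N] (hx : x.Coprime N) :
    0 < orderOf (x : ZMod N) := by
  rw [← ZMod.coe_unitOfCoprime x hx, orderOf_units]
  exact orderOf_pos _

lemma orderOf_eq_mul_pow_of_orderOf_sq {p r : ℕ} (hp : p.Prime) (hp2 : p ≠ 2) (hr : ¬ p ∣ r)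
    (h : orderOf (r : ZMod (p ^ 2)) = orderOf (r : ZMod p) * p) (n : ℕ) :
    orderOf (r : ZMod (p ^ (n + 1))) = orderOf (r : ZMod p) * p ^ n := by
  have : NeZero p := ⟨hp.ne_zero⟩
  set d := orderOf (r : ZMod p)
  have hd : 0 < d := orderOf_natCast_pos (hp.coprime_iff_not_dvd.2 hr).symm
  have hpos : 0 < r ^ d := Nat.pow_pos (Nat.pos_of_ne_zero fun h0 => hr (h0 ▸ dvd_zero p))
  obtain ⟨c, hc⟩ := (Nat.modEq_iff_dvd' hpos).1 (orderOf_natCast_dvd_iff.1 (dvd_refl d)).symm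
  have hpc : ¬ p ∣ c := fun hpc => by
    have hsq : p ^ 2 ∣ r ^ d - 1 := by
      rw [hc, sq]
      exact mul_dvd_mul_left p hpc
    have hdvd : d * p ∣ d :=
      h ▸ orderOf_natCast_dvd_iff.2 ((Nat.modEq_iff_dvd' hpos).2 hsq).symm
    exact absurd (Nat.le_of_dvd hd hdvd) (not_le.2 (lt_mul_of_one_lt_right hd hp.one_lt))
  have hpow : (r : ZMod (p ^ (n + 1))) ^ d = 1 + (p : ZMod (p ^ (n + 1))) * (c : ℤ) := by
    rw [← Nat.cast_pow, ← Nat.add_sub_cancel' hpos, hc]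
    push_cast
    ring
  have horder : orderOf ((r : ZMod (p ^ (n + 1))) ^ d) = p ^ n := by
    rw [hpow, ZMod.orderOf_one_add_mul_prime hp hp2 c (mod_cast hpc)]
  obtain ⟨a, -, ha⟩ := exists_orderOf_eq_mul_pow hp r n
  rw [ha, ← horder, orderOf_pow_of_dvd hd.ne' (Dvd.intro _ ha.symm), ha,
    Nat.mul_div_cancel_left _ hd]

lemma clPow_subset_iff {p s t : ℕ} (hp : p.Prime) (hs : ¬ p ∣ s) :
    clPow p s ⊆ clPow p t ↔ ∀ n, ∃ k, 0 < k ∧ t ^ k ≡ s [MOD p ^ n] := by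
  have hs0 : 0 < s := Nat.pos_of_ne_zero fun h0 => hs (h0 ▸ dvd_zero p)
  constructor
  · intro hst
    have hmem : (⟨s, hs0⟩ : ℕ+) ∈ clPow p s :=
      (mem_clPow_iff hp).2 ⟨hs, fun n => ⟨1, one_pos, by rw [pow_one, PNat.mk_coe]⟩⟩
    exact ((mem_clPow_iff hp).1 (hst hmem)).2
  · intro hst y hy
    obtain ⟨hpy, hsy⟩ := (mem_clPow_iff hp).1 hy
    refine (mem_clPow_iff hp).2 ⟨hpy, fun n => ?_⟩
    obtain ⟨j, hj, hsj⟩ := hsy n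
    obtain ⟨k, hk, htk⟩ := hst n
    exact ⟨k * j, Nat.mul_pos hk hj, pow_mul t k j ▸ (htk.pow j).trans hsj⟩

lemma clPow_eq_empty {p s : ℕ} (hp : p.Prime) (hs : p ∣ s) : clPow p s = ∅ := by
  refine Set.eq_empty_of_forall_notMem fun y hy => ?_
  obtain ⟨hpy, hsy⟩ := (mem_clPow_iff hp).1 hy
  obtain ⟨k, hk, hky⟩ := hsy 1
  exact hpy ((hky.dvd_iff (dvd_pow_self p one_ne_zero)).1 (dvd_pow hs hk.ne'))

lemma pow_mem_clPow {p r j : ℕ} (hp : p.Prime) (hj : 0 < j) {y : ℕ+} (hy : y ∈ clPow p r) :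
    y ^ j ∈ clPow p r := by
  obtain ⟨hpy, hry⟩ := (mem_clPow_iff hp).1 hy
  refine (mem_clPow_iff hp).2 ⟨fun hpj => hpy (hp.dvd_of_dvd_pow (by simpa using hpj)),
    fun n => ?_⟩
  obtain ⟨k, hk, hky⟩ := hry n
  exact ⟨k * j, Nat.mul_pos hk hj, by simpa [pow_mul] using hky.pow j⟩

lemma mem_clPow_iff_orderOf_dvd {p r : ℕ} (hp : p.Prime) (hp2 : p ≠ 2) (hr : ¬ p ∣ r) {y : ℕ+} :
    y ∈ clPow p r ↔ ¬ p ∣ (y : ℕ) ∧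
      ∀ n, orderOf (y : ZMod (p ^ (n + 1))) ∣ orderOf (r : ZMod (p ^ (n + 1))) := by
  have := Fact.mk hp
  refine (mem_clPow_iff hp).trans (and_congr_right fun hy => ?_)
  have hiff (n : ℕ) : (∃ k, 0 < k ∧ r ^ k ≡ y [MOD p ^ n]) ↔
      orderOf (y : ZMod (p ^ n)) ∣ orderOf (r : ZMod (p ^ n)) :=
    have := ZMod.isCyclic_units_of_prime_pow p hp hp2 n
    exists_pow_modEq_iff_orderOf_dvd (coprime_prime_pow_of_not_dvd hp hr n)
      (coprime_prime_pow_of_not_dvd hp hy n)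
  refine ⟨fun h n => (hiff _).1 (h _), fun h n => ?_⟩
  obtain ⟨k, hk, hky⟩ := (hiff _).2 (h n)
  exact ⟨k, hk, hky.of_dvd (pow_dvd_pow p n.le_succ)⟩

lemma clPow_subset_or_subset {p s t : ℕ} (hp : p.Prime) (hp2 : p ≠ 2) (hs : ¬ p ∣ s)
    (ht : ¬ p ∣ t) (hst : orderOf (s : ZMod p) = orderOf (t : ZMod p)) :
    clPow p s ⊆ clPow p t ∨ clPow p t ⊆ clPow p s := by
  have := Fact.mk hp
  have total (n : ℕ) :
      (∃ k, 0 < k ∧ t ^ k ≡ s [MOD p ^ n]) ∨ ∃ k, 0 < k ∧ s ^ k ≡ t [MOD p ^ n] := by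
    cases n with
    | zero => exact Or.inl ⟨1, one_pos, by rw [pow_zero]; exact Nat.modEq_one⟩
    | succ n =>
      have := ZMod.isCyclic_units_of_prime_pow p hp hp2 (n + 1)
      have hs := coprime_prime_pow_of_not_dvd hp hs (n + 1)
      have ht := coprime_prime_pow_of_not_dvd hp ht (n + 1)
      obtain ⟨a, -, ha⟩ := exists_orderOf_eq_mul_pow hp s n
      obtain ⟨b, -, hb⟩ := exists_orderOf_eq_mul_pow hp t n
      rw [exists_pow_modEq_iff_orderOf_dvd ht hs, exists_pow_modEq_iff_orderOf_dvd hs ht, ha, hb,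
        hst]
      exact (le_total a b).imp (fun hab => mul_dvd_mul_left _ (pow_dvd_pow p hab))
        fun hba => mul_dvd_mul_left _ (pow_dvd_pow p hba)
  rw [clPow_subset_iff hp hs, clPow_subset_iff hp ht]
  -- Solvability modulo `p ^ n` descends to smaller `n`, so one alternative holds for every `n`.
  by_contra! ⟨⟨n, hn⟩, m, hm⟩
  rcases total (max n m) with ⟨k, hk, hkn⟩ | ⟨k, hk, hkm⟩
  · exact hn k hk (hkn.of_dvd (pow_dvd_pow p (le_max_left n m)))
  · exact hm k hk (hkm.of_dvd (pow_dvd_pow p (le_max_right n m)))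

lemma exists_prime_forall_orderOf_eq {p d : ℕ} (hp : p.Prime) (hp2 : p ≠ 2) (hd : d ∣ p - 1) :
    ∃ r : ℕ, r.Prime ∧ ¬ p ∣ r ∧ ∀ n, orderOf (r : ZMod (p ^ (n + 1))) = d * p ^ n := by
  have := Fact.mk hp
  have := ZMod.isCyclic_units_of_prime_pow p hp hp2 2
  have hdp : d * p ∣ (p ^ 2).totient := by
    rw [Nat.totient_prime_pow_succ hp, pow_one, mul_comm]
    exact mul_dvd_mul_left p hd
  obtain ⟨r, hr, hrp, horder⟩ := exists_prime_orderOf_eq hdp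
  rw [Nat.coprime_pow_right_iff two_pos] at hrp
  have hpr : ¬ p ∣ r := hp.coprime_iff_not_dvd.1 hrp.symm
  have horder_one : orderOf (r : ZMod p) = d := by
    obtain ⟨a, ha, hra⟩ := exists_orderOf_eq_mul_pow hp r 1
    have hdvd : orderOf (r : ZMod p) ∣ p - 1 := by
      rw [orderOf_natCast_dvd_iff, ← Nat.totient_prime hp]
      exact Nat.ModEq.pow_totient hrp
    rw [horder] at hra
    interval_cases a
    · have hp1 : p ∣ p - 1 := ((dvd_mul_left p d).trans (by simp [hra])).trans hdvd
      exact absurd hp1 (Nat.not_dvd_of_pos_of_lt (Nat.sub_pos_of_lt hp.one_lt)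
        (Nat.sub_lt hp.pos one_pos))
    · exact (Nat.eq_of_mul_eq_mul_right hp.pos (by simpa using hra)).symm
  rw [← horder_one] at horder ⊢
  exact ⟨r, hr, hpr, orderOf_eq_mul_pow_of_orderOf_sq hp hp2 hpr horder⟩

lemma exists_prime_clPow_eq {p d : ℕ} (hp : p.Prime) (hp2 : p ≠ 2) (hd : d ∣ p - 1) :
    ∃ r : ℕ, r.Prime ∧ clPow p r = {x : ℕ+ | x ^ d ≡ 1 [MOD p]} := by
  obtain ⟨r, hr, hpr, horder⟩ := exists_prime_forall_orderOf_eq hp hp2 hd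
  have hd0 : 0 < d := Nat.pos_of_dvd_of_pos hd (Nat.sub_pos_of_lt hp.one_lt)
  refine ⟨r, hr, Set.ext fun y => ?_⟩
  rw [mem_clPow_iff_orderOf_dvd hp hp2 hpr, Set.mem_ofPred_eq]
  simp only [horder]
  refine ⟨fun hy => ?_, fun hy => ⟨?_, orderOf_dvd_mul_pow hy⟩⟩
  · simpa [orderOf_natCast_dvd_iff] using hy.2 0
  · rw [← hp.coprime_iff_not_dvd, Nat.coprime_comm, ← Nat.coprime_pow_left_iff hd0, Nat.Coprime,
      hy.gcd_eq, Nat.gcd_one_left]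

lemma exists_prime_forall_mem_clPow {p : ℕ} (hp : p.Prime) (hp2 : p ≠ 2) :
    ∃ r : ℕ, r.Prime ∧ ∀ y : ℕ+, ¬ p ∣ (y : ℕ) → y ∈ clPow p r := by
  obtain ⟨r, hr, hclPow⟩ := exists_prime_clPow_eq hp hp2 dvd_rfl
  refine ⟨r, hr, fun y hy => ?_⟩
  rw [hclPow, Set.mem_ofPred_eq, ← Nat.totient_prime hp]
  exact Nat.ModEq.pow_totient (hp.coprime_iff_not_dvd.2 hy).symm

lemma exists_notMem_clPow_two (r : ℕ) : ∃ y : ℕ+, ¬ 2 ∣ (y : ℕ) ∧ y ∉ clPow 2 r := by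
  by_contra! h
  refine ZMod.not_isCyclic_units_eight
    (isCyclic_units_of_forall_exists_pow_modEq (r := r) fun y hy => ?_)
  have hy2 : ¬ 2 ∣ y :=
    Nat.prime_two.coprime_iff_not_dvd.1 (hy.coprime_dvd_right (by decide)).symm
  have hy0 : 0 < y := Nat.pos_of_ne_zero fun h0 => hy2 (h0 ▸ dvd_zero 2)
  exact ((mem_clPow_iff Nat.prime_two).1 (h ⟨y, hy0⟩ hy2)).2 3

lemma exists_ne_clPow_three_subset (s : Fin 3 → ℕ) :
    ∃ i j, i ≠ j ∧ clPow 3 (s i) ⊆ clPow 3 (s j) := by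
  by_cases hs : ∃ i, 3 ∣ s i
  · obtain ⟨i, hi⟩ := hs
    obtain ⟨j, hji⟩ := exists_ne i
    exact ⟨i, j, hji.symm, by simp [clPow_eq_empty Nat.prime_three hi]⟩
  push Not at hs
  obtain ⟨i, j, hij, hmod⟩ := Fintype.exists_ne_map_eq_of_card_lt
    (fun i => ZMod.unitOfCoprime (s i) (Nat.prime_three.coprime_iff_not_dvd.2 (hs i)).symm)
    (by rw [ZMod.card_units_eq_totient]; decide)
  have horder : orderOf (s i : ZMod 3) = orderOf (s j : ZMod 3) := by
    simpa [← orderOf_units] using congrArg orderOf hmod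
  rcases clPow_subset_or_subset Nat.prime_three (by decide) (hs i) (hs j) horder with hsub | hsub
  · exact ⟨i, j, hij, hsub⟩
  · exact ⟨j, i, hij.symm, hsub⟩

lemma exists_antichain_dvd_totient_cube {p : ℕ} (hp : p.Prime) (hp5 : 5 ≤ p) :
    ∃ d : Fin 3 → ℕ, (∀ i, d i ∣ (p ^ 3).totient) ∧ ∀ i j, i ≠ j → ¬ d i ∣ d j := by
  have hcop : (p - 1).Coprime p := by
    rw [Nat.coprime_comm, hp.coprime_iff_not_dvd]
    exact Nat.not_dvd_of_pos_of_lt (by omega) (by omega)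
  have hnot : ¬ p ∣ p - 1 := hp.coprime_iff_not_dvd.1 hcop.symm
  have heven : 2 ∣ p - 1 := by
    have := hp.eq_two_or_odd
    omega
  refine ⟨![p - 1, 2 * p, p ^ 2], ?_, ?_⟩
  · rw [Nat.totient_prime_pow_succ hp, Fin.forall_fin_succ, Fin.forall_fin_two]
    refine ⟨dvd_mul_left _ _, ?_, dvd_mul_right _ _⟩
    exact mul_comm p 2 ▸ mul_dvd_mul (dvd_pow_self p two_ne_zero) heven
  · have h01 : ¬ p - 1 ∣ 2 * p := fun h => by
      have := Nat.le_of_dvd two_pos (hcop.dvd_of_dvd_mul_right h)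
      omega
    have h02 : ¬ p - 1 ∣ p ^ 2 := fun h => by
      have := (hcop.pow_right 2).eq_one_of_dvd h
      omega
    have h12 : ¬ 2 * p ∣ p ^ 2 := fun h => by
      have := (Nat.prime_dvd_prime_iff_eq Nat.prime_two hp).1
        (Nat.prime_two.dvd_of_dvd_pow ((dvd_mul_right 2 p).trans h))
      omega
    have h21 : ¬ p ^ 2 ∣ 2 * p := fun h => by
      rw [sq] at h
      have := Nat.le_of_dvd two_pos (Nat.dvd_of_mul_dvd_mul_right hp.pos h)
      omega
    have h10 : ¬ 2 * p ∣ p - 1 := fun h => hnot ((dvd_mul_left p 2).trans h)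
    have h20 : ¬ p ^ 2 ∣ p - 1 := fun h => hnot ((dvd_pow_self p two_ne_zero).trans h)
    intro i j hij
    fin_cases i <;> fin_cases j <;> first | exact absurd rfl hij | assumption

lemma exists_primes_clPow_antichain {p : ℕ} (hp : p.Prime) (hp5 : 5 ≤ p) :
    ∃ r : Fin 3 → ℕ, (∀ i, (r i).Prime) ∧
      ∀ i j, i ≠ j → ¬ clPow p (r i) ⊆ clPow p (r j) := by
  have := Fact.mk hp
  have := ZMod.isCyclic_units_of_prime_pow p hp (by omega) 3
  obtain ⟨d, hdvd, hd⟩ := exists_antichain_dvd_totient_cube hp hp5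
  choose r hr hrp horder using fun i => exists_prime_orderOf_eq (hdvd i)
  refine ⟨r, hr, fun i j hij hsub => hd i j hij ?_⟩
  have hpr : ¬ p ∣ r i := hp.coprime_iff_not_dvd.1
    ((Nat.coprime_pow_right_iff three_pos _ _).1 (hrp i)).symm
  rw [← horder, ← horder, ← exists_pow_modEq_iff_orderOf_dvd (hrp j) (hrp i)]
  exact (clPow_subset_iff hp hpr).1 hsub 3

/-! ### Homeomorphisms fix the primes `2` and `3` -/

lemma PrimeCorr.clPow_subset_iff {h : ℕ+ ≃ₜ ℕ+} {p q r r' s s' : ℕ} (hpq : PrimeCorr h p q)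
    (hrs : PrimeCorr h r s) (hrs' : PrimeCorr h r' s') :
    clPow q s ⊆ clPow q s' ↔ clPow p r ⊆ clPow p r' := by
  have hpre {t u : ℕ} (htu : PrimeCorr h t u) : h ⁻¹' clPow q u = clPow p t :=
    Set.ext fun _ => hpq.map_mem_clPow_iff htu
  rw [← hpre hrs, ← hpre hrs', h.surjective.preimage_subset_preimage_iff]

lemma primeCorr_two (h : ℕ+ ≃ₜ ℕ+) : PrimeCorr h 2 2 := by
  obtain ⟨q, hq⟩ := exists_primeCorr h Nat.prime_two
  obtain rfl | hq2 := eq_or_ne q 2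
  · exact hq
  obtain ⟨s, hs, hdense⟩ := exists_prime_forall_mem_clPow hq.prime_right hq2
  obtain ⟨r, hr⟩ := exists_primeCorr h.symm hs
  obtain ⟨y, hy, hyr⟩ := exists_notMem_clPow_two r
  exact absurd ((hq.map_mem_clPow_iff hr.symm).1 (hdense (h y) ((hq.dvd_iff y).not.1 hy))) hyr

lemma primeCorr_three (h : ℕ+ ≃ₜ ℕ+) : PrimeCorr h 3 3 := by
  obtain ⟨q, hq⟩ := exists_primeCorr h Nat.prime_three
  obtain rfl | hq3 := eq_or_ne q 3
  · exact hq
  have hq2 : q ≠ 2 := by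
    rintro rfl
    exact absurd (hq.left_unique (primeCorr_two h)) (by decide)
  obtain ⟨s, hs, hanti⟩ := exists_primes_clPow_antichain hq.prime_right
    (hq.prime_right.five_le_of_ne_two_of_ne_three hq2 hq3)
  choose r hr using fun i => exists_primeCorr h.symm (hs i)
  obtain ⟨i, j, hij, hsub⟩ := exists_ne_clPow_three_subset r
  exact absurd ((hq.clPow_subset_iff (hr i).symm (hr j).symm).2 hsub) (hanti i j hij)

/-- If `h q = q ^ k`, then `h.symm` maps a set `clPow p r` separating `q ^ k` from `q` to a set
`clPow p' r'` that contains `q` but not its power `h.symm q`. -/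
lemma map_eq_self_of_separated (h : ℕ+ ≃ₜ ℕ+) {q : ℕ+} (hq : PrimeCorr h q q)
    (hsep : ∀ k, 2 ≤ k → ∃ p r : ℕ, p.Prime ∧ r.Prime ∧ q ^ k ∈ clPow p r ∧ q ∉ clPow p r) :
    h q = q := by
  have exists_pow {g : ℕ+ ≃ₜ ℕ+} (hg : PrimeCorr g q q) : ∃ k, 0 < k ∧ g q = q ^ k := by
    obtain ⟨k, hk, hqk⟩ := hg.mem_powSet_iff.2 ⟨1, one_pos, (pow_one (q : ℕ)).symm⟩
    exact ⟨k, hk, PNat.coe_injective (by simpa using hqk)⟩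
  obtain ⟨k, hk, hqk⟩ := exists_pow hq
  obtain ⟨j, hj, hqj⟩ := exists_pow hq.symm
  obtain rfl | hk2 := Nat.eq_or_lt_of_le hk
  · rw [hqk, Nat.succ_eq_add_one, zero_add, pow_one]
  obtain ⟨p, r, hp, hr, hmem, hnot⟩ := hsep k hk2
  obtain ⟨p', hpp'⟩ := exists_primeCorr h.symm hp
  obtain ⟨r', hrr'⟩ := exists_primeCorr h.symm hr
  have hq' : q ∈ clPow p' r' := (hpp'.symm.map_mem_clPow_iff hrr'.symm).1 (hqk ▸ hmem)
  exact absurd ((hpp'.map_mem_clPow_iff hrr').1 (hqj ▸ pow_mem_clPow hpp'.prime_right hj hq')) hnot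

lemma exists_clPow_separating {p d k : ℕ} (hp : p.Prime) (hp2 : p ≠ 2) (hd : d ∣ p - 1) {q : ℕ+}
    (hqk : ((q : ℕ) ^ k) ^ d ≡ 1 [MOD p]) (hq : ¬ (q : ℕ) ^ d ≡ 1 [MOD p]) :
    ∃ p r : ℕ, p.Prime ∧ r.Prime ∧ q ^ k ∈ clPow p r ∧ q ∉ clPow p r := by
  obtain ⟨r, hr, hclPow⟩ := exists_prime_clPow_eq hp hp2 hd
  exact ⟨p, r, hp, hr, by simpa [hclPow] using hqk, by simpa [hclPow] using hq⟩

lemma map_two_eq (h : ℕ+ ≃ₜ ℕ+) : h 2 = 2 := by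
  refine map_eq_self_of_separated h (primeCorr_two h) fun k hk => ?_
  have hle : 2 ^ 2 ≤ 2 ^ k := Nat.pow_le_pow_right two_pos hk
  have heven : 2 ∣ 2 ^ k := dvd_pow_self 2 (by omega)
  obtain ⟨p, hp, hpk⟩ := Nat.exists_prime_and_dvd (show 2 ^ k - 1 ≠ 1 by omega)
  refine exists_clPow_separating hp ?_ (one_dvd _) ?_ fun hmod => ?_
  · rintro rfl
    omega
  · simpa using ((Nat.modEq_iff_dvd' Nat.one_le_two_pow).2 hpk).symm
  · exact hp.not_dvd_one ((Nat.modEq_iff_dvd' one_le_two).1 hmod.symm)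

lemma exists_odd_prime_three_pow_modEq_one {k : ℕ} (hk : Odd k) (hk2 : 2 ≤ k) :
    ∃ p : ℕ, p.Prime ∧ p ≠ 2 ∧ 3 ^ k ≡ 1 [MOD p] := by
  obtain ⟨m, rfl⟩ := hk
  have hmod : 3 ^ (2 * m + 1) ≡ 3 [MOD 4] := by
    simpa [pow_succ, pow_mul] using
      ((show 3 ^ 2 ≡ 1 [MOD 4] by decide).pow m).mul_right 3
  have hle : 3 ^ 2 ≤ 3 ^ (2 * m + 1) := Nat.pow_le_pow_right three_pos hk2
  obtain ⟨t, ht⟩ := (Nat.modEq_iff_dvd' (by omega)).1 hmod.symm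
  obtain ⟨p, hp, hpt⟩ := Nat.exists_prime_and_dvd (show 2 * t + 1 ≠ 1 by omega)
  refine ⟨p, hp, ?_, ((Nat.modEq_iff_dvd' (Nat.one_le_pow _ _ three_pos)).2 ?_).symm⟩
  · rintro rfl
    omega
  · rw [show 3 ^ (2 * m + 1) - 1 = 2 * (2 * t + 1) by omega]
    exact hpt.mul_left 2

lemma map_three_eq (h : ℕ+ ≃ₜ ℕ+) : h 3 = 3 := by
  refine map_eq_self_of_separated h (primeCorr_three h) fun k hk => ?_
  obtain heven | hodd := Nat.even_or_odd k
  · obtain ⟨m, rfl⟩ := heven.two_dvd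
    refine exists_clPow_separating Nat.prime_five (d := 2) (by decide) (by decide) ?_ (by decide)
    rw [← pow_mul, mul_right_comm, pow_mul]
    simpa using (show 3 ^ (2 * 2) ≡ 1 [MOD 5] by decide).pow m
  · obtain ⟨p, hp, hp2, hmod⟩ := exists_odd_prime_three_pow_modEq_one hodd hk
    refine exists_clPow_separating hp hp2 (one_dvd _) (by simpa using hmod) fun h3 => ?_
    have hp_dvd : p ∣ 2 := (Nat.modEq_iff_dvd' (by decide : 1 ≤ 3)).1 h3.symm
    exact hp2 ((Nat.prime_dvd_prime_iff_eq hp Nat.prime_two).1 hp_dvd)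

/-- Every homeomorphism of the Golomb space fixes `1`, `2` and `3`. -/
theorem golomb_homeo_fixes_small (h : ℕ+ ≃ₜ ℕ+) (n : ℕ+)
    (hn : n = 1 ∨ n = 2 ∨ n = 3) : h n = n := by
  rcases hn with rfl | rfl | rfl
  · exact map_one_eq h
  · exact map_two_eq h
  · exact map_three_eq h
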